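/- Let 1 ≤ k ≤ L be integers, λ > 0, K ∈ ℕ, and let s^{(1)} and s^{(2)} be solutions of the truncated system on coordinates 1,…,K, both taking values in [0,1] in every coordinate. If s^{(1)}_j(0) ≥ s^{(2)}_j(0) for all j = 1,…,K and s^{(1)}_{K+1}(t) ≥ s^{(2)}_{K+1}(t) for all t ≥ 0, then s^{(1)}_j(t) ≥ s^{(2)}_j(t) for all j = 1,…,K+1 and all t ≥ 0. -/

import Mathlib

open Finset Set

/-- The polynomial `f ≡ f^{(L,k)}` from the paper. -/
noncomputable def fLk (L k : ℕ) (x : ℝ) : ℝ :=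
  ∑ i ∈ Finset.Icc 1 k,
    (L.choose (L - k + i) : ℝ) * ((L - k + i - 2).choose (i - 1) : ℝ) *
      (-1 : ℝ) ^ (i - 1) * x ^ (L - k + i)

/-- A solution of the truncated system on coordinates `1,…,K`
(no condition on the boundary coordinate `K+1`). -/
def IsTruncSys (L k : ℕ) (lam : ℝ) (K : ℕ) (s : ℝ → ℕ → ℝ) : Prop :=
  (∀ t ∈ Set.Ici (0 : ℝ), s t 0 = 1) ∧
  (∀ j, 1 ≤ j → j ≤ K → ∀ t ∈ Set.Ici (0 : ℝ),
    HasDerivWithinAt (fun τ => s τ j)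
      (lam * (fLk L k (s t (j - 1)) - fLk L k (s t j)) - k * (s t j - s t (j + 1)))
      (Set.Ici (0 : ℝ)) t)

/-!
Let `w = s2 - s1`. The drift of coordinate `j` is nondecreasing in both neighbouring coordinates
and nonincreasing in coordinate `j` itself, so wherever `w j > 0` its derivative is at most a
constant times the positive parts of `w (j - 1)` and `w (j + 1)`. Hence `V = ∑ j, (w j)⁺ ^ 2`
satisfies `V' ≤ M * V` and `V 0 = 0`, and Grönwall's inequality gives `V = 0`.

The monotonicity of `f` on `[0, 1]` comes from its second derivative: for `k < L`,
`f'' x` is a positive multiple of `x ^ (L - k - 1) * (1 - x) ^ (k - 1)` and `f' 0 = 0`.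
-/

theorem hasDerivAt_posPart_sq (x : ℝ) : HasDerivAt (fun y : ℝ => y⁺ ^ 2) (2 * x⁺) x := by
  have away : ∀ y : ℝ, y ≠ 0 → HasDerivAt (fun z : ℝ => z⁺ ^ 2) (2 * y⁺) y := by
    intro y hy
    rcases hy.lt_or_gt with hneg | hpos
    · rw [posPart_eq_zero.2 hneg.le, mul_zero]
      refine (hasDerivAt_const y (0 : ℝ)).congr_of_eventuallyEq ?_
      filter_upwards [Iio_mem_nhds hneg] with z hz
      rw [posPart_eq_zero.2 (mem_Iio.1 hz).le, zero_pow two_ne_zero]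
    · rw [posPart_of_nonneg hpos.le]
      have hsq : HasDerivAt (fun z : ℝ => z ^ 2) (2 * y) y := by
        simpa using hasDerivAt_pow 2 y
      refine hsq.congr_of_eventuallyEq ?_
      filter_upwards [Ioi_mem_nhds hpos] with z hz
      rw [posPart_of_nonneg (mem_Ioi.1 hz).le]
  rcases eq_or_ne x 0 with rfl | hx
  · exact hasDerivAt_of_hasDerivAt_of_ne (g := fun y : ℝ => 2 * y⁺) away
      (continuous_posPart.pow 2).continuousAt (continuous_const.mul continuous_posPart).continuousAt
  · exact away x hx

theorem nonpos_of_hasDerivWithinAt_le_mul {V V' : ℝ → ℝ} {a M : ℝ}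
    (hV : ∀ t ∈ Ici a, HasDerivWithinAt V (V' t) (Ici a) t)
    (hle : ∀ t ∈ Ici a, V' t ≤ M * V t) (ha : V a ≤ 0) :
    ∀ t ∈ Ici a, V t ≤ 0 := by
  intro t ht
  have hgronwall := le_gronwallBound_of_liminf_deriv_right_le (b := t) (ε := 0)
    (fun r hr => ((hV r hr.1).mono Icc_subset_Ici_self).continuousWithinAt)
    (fun r hr _ => ((hV r hr.1).mono (Ici_subset_Ici.2 hr.1)).liminf_right_slope_le)
    ha (fun r hr => (hle r hr.1).trans_eq (add_zero _).symm) t ⟨ht, le_rfl⟩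
  rwa [gronwallBound_ε0_δ0] at hgronwall

theorem nonpos_of_deriv_le_mul_sum_posPart {ι : Type*} {s : Finset ι} {w w' : ℝ → ι → ℝ}
    {a C : ℝ} (hC : 0 ≤ C)
    (hw : ∀ i ∈ s, ∀ t ∈ Ici a, HasDerivWithinAt (fun τ => w τ i) (w' t i) (Ici a) t)
    (hle : ∀ t ∈ Ici a, ∀ i ∈ s, 0 < w t i → w' t i ≤ C * ∑ j ∈ s, (w t j)⁺)
    (ha : ∀ i ∈ s, w a i ≤ 0) :
    ∀ t ∈ Ici a, ∀ i ∈ s, w t i ≤ 0 := by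
  have hderiv : ∀ t ∈ Ici a, HasDerivWithinAt (fun τ => ∑ i ∈ s, (w τ i)⁺ ^ 2)
      (∑ i ∈ s, 2 * (w t i)⁺ * w' t i) (Ici a) t := fun t ht =>
    HasDerivWithinAt.fun_sum fun i hi =>
      (hasDerivAt_posPart_sq (w t i)).comp_hasDerivWithinAt (h := fun τ => w τ i) t (hw i hi t ht)
  have hterm : ∀ t ∈ Ici a, ∀ i ∈ s,
      2 * (w t i)⁺ * w' t i ≤ 2 * (w t i)⁺ * (C * ∑ j ∈ s, (w t j)⁺) := by
    intro t ht i hi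
    rcases le_or_gt (w t i) 0 with hnonpos | hpos
    · simp only [posPart_eq_zero.2 hnonpos, mul_zero, zero_mul, le_refl]
    · gcongr
      exact hle t ht i hi hpos
  have hgrowth : ∀ t ∈ Ici a,
      ∑ i ∈ s, 2 * (w t i)⁺ * w' t i ≤ 2 * C * #s * ∑ i ∈ s, (w t i)⁺ ^ 2 := by
    intro t ht
    calc ∑ i ∈ s, 2 * (w t i)⁺ * w' t i
        ≤ ∑ i ∈ s, 2 * (w t i)⁺ * (C * ∑ j ∈ s, (w t j)⁺) := Finset.sum_le_sum (hterm t ht)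
      _ = 2 * C * (∑ i ∈ s, (w t i)⁺) ^ 2 := by
          rw [← Finset.sum_mul, ← Finset.mul_sum]
          ring
      _ ≤ 2 * C * (#s * ∑ i ∈ s, (w t i)⁺ ^ 2) := by
          gcongr
          exact sq_sum_le_card_mul_sum_sq
      _ = 2 * C * #s * ∑ i ∈ s, (w t i)⁺ ^ 2 := by ring
  have hinit : ∑ i ∈ s, (w a i)⁺ ^ 2 ≤ 0 := by
    refine (Finset.sum_eq_zero fun i hi => ?_).le
    rw [posPart_eq_zero.2 (ha i hi), zero_pow two_ne_zero]
  intro t ht i hi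
  have hsum := nonpos_of_hasDerivWithinAt_le_mul hderiv hgrowth hinit t ht
  have hsq : (w t i)⁺ ^ 2 ≤ 0 :=
    (Finset.single_le_sum (fun j _ => sq_nonneg (w t j)⁺) hi).trans hsum
  exact posPart_eq_zero.1 (pow_eq_zero_iff two_ne_zero |>.1 (hsq.antisymm (sq_nonneg _)))

theorem posPart_le_sum_Icc_posPart {w : ℕ → ℝ} {K i : ℕ} (hleft : w 0 ≤ 0)
    (hright : w (K + 1) ≤ 0) (hi : i ≤ K + 1) : (w i)⁺ ≤ ∑ j ∈ Finset.Icc 1 K, (w j)⁺ := by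
  by_cases hmem : i ∈ Finset.Icc 1 K
  · exact Finset.single_le_sum (f := fun j => (w j)⁺) (fun j _ => posPart_nonneg (w j)) hmem
  · have hend : i = 0 ∨ i = K + 1 := by
      rw [Finset.mem_Icc] at hmem
      omega
    have hw : (w i)⁺ = 0 := posPart_eq_zero.2 (by rcases hend with rfl | rfl <;> assumption)
    exact hw.trans_le (Finset.sum_nonneg fun j _ => posPart_nonneg (w j))

theorem sub_le_mul_posPart_sub {f : ℝ → ℝ} {S : Set ℝ} {C : NNReal} (hmono : MonotoneOn f S)
    (hlip : LipschitzOnWith C f S) {x y : ℝ} (hx : x ∈ S) (hy : y ∈ S) :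
    f x - f y ≤ C * (x - y)⁺ := by
  rcases le_total x y with hxy | hyx
  · rw [posPart_eq_zero.2 (sub_nonpos.2 hxy), mul_zero]
    exact sub_nonpos.2 (hmono hx hy hxy)
  · rw [posPart_of_nonneg (sub_nonneg.2 hyx), ← abs_of_nonneg (sub_nonneg.2 hyx)]
    exact (le_abs_self _).trans (hlip.dist_le_mul x hx y hy)

/-- The drift of coordinate `j` in a nearest-neighbour chain: a nonlinear inflow `lam * f` from
the left neighbour and a linear exchange at rate `mu` with the right one. For `f = fLk L k` and
`mu = k` it is the right-hand side of the truncated system; as there, only `j ≥ 1` is meaningful. -/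
def chainDrift (f : ℝ → ℝ) (lam mu : ℝ) (x : ℕ → ℝ) (j : ℕ) : ℝ :=
  lam * (f (x (j - 1)) - f (x j)) - mu * (x j - x (j + 1))

section Chain

variable {f : ℝ → ℝ} {S : Set ℝ} {C : NNReal} {lam mu : ℝ}

theorem chainDrift_sub_le (hmono : MonotoneOn f S) (hlip : LipschitzOnWith C f S)
    (hlam : 0 ≤ lam) (hmu : 0 ≤ mu) {x y : ℕ → ℝ} {j : ℕ} (hx' : x (j - 1) ∈ S) (hx : x j ∈ S)
    (hy' : y (j - 1) ∈ S) (hy : y j ∈ S) (hle : y j ≤ x j) :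
    chainDrift f lam mu x j - chainDrift f lam mu y j ≤
      lam * (C * (x (j - 1) - y (j - 1))⁺) + mu * (x (j + 1) - y (j + 1))⁺ := by
  have hinflow : lam * (f (x (j - 1)) - f (y (j - 1))) ≤ lam * (C * (x (j - 1) - y (j - 1))⁺) :=
    mul_le_mul_of_nonneg_left (sub_le_mul_posPart_sub hmono hlip hx' hy') hlam
  have hexchange : mu * (x (j + 1) - y (j + 1)) ≤ mu * (x (j + 1) - y (j + 1))⁺ :=
    mul_le_mul_of_nonneg_left (le_posPart _) hmu
  have hdiag_f : 0 ≤ lam * (f (x j) - f (y j)) :=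
    mul_nonneg hlam (sub_nonneg.2 (hmono hy hx hle))
  have hdiag : 0 ≤ mu * (x j - y j) := mul_nonneg hmu (sub_nonneg.2 hle)
  simp only [chainDrift]
  linarith

theorem chainDrift_sub_le_mul_sum_posPart (hmono : MonotoneOn f S) (hlip : LipschitzOnWith C f S)
    (hlam : 0 ≤ lam) (hmu : 0 ≤ mu) {x y : ℕ → ℝ} {j K : ℕ} (hx : ∀ i ≤ K, x i ∈ S)
    (hy : ∀ i ≤ K, y i ∈ S) (hleft : x 0 ≤ y 0) (hright : x (K + 1) ≤ y (K + 1)) (hj : j ≤ K)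
    (hle : y j ≤ x j) :
    chainDrift f lam mu x j - chainDrift f lam mu y j ≤
      (lam * C + mu) * ∑ i ∈ Finset.Icc 1 K, (x i - y i)⁺ := by
  have hpred : j - 1 ≤ K := (j.sub_le 1).trans hj
  have hgap : ∀ i ≤ K + 1, (x i - y i)⁺ ≤ ∑ i ∈ Finset.Icc 1 K, (x i - y i)⁺ := fun _ =>
    posPart_le_sum_Icc_posPart (w := fun i => x i - y i) (sub_nonpos.2 hleft)
      (sub_nonpos.2 hright)
  calc chainDrift f lam mu x j - chainDrift f lam mu y j
      ≤ lam * (C * (x (j - 1) - y (j - 1))⁺) + mu * (x (j + 1) - y (j + 1))⁺ :=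
        chainDrift_sub_le hmono hlip hlam hmu (hx _ hpred) (hx _ hj) (hy _ hpred) (hy _ hj) hle
    _ ≤ lam * (C * ∑ i ∈ Finset.Icc 1 K, (x i - y i)⁺) +
          mu * ∑ i ∈ Finset.Icc 1 K, (x i - y i)⁺ := by
        gcongr
        · exact hgap _ (hpred.trans K.le_succ)
        · exact hgap _ (Nat.succ_le_succ hj)
    _ = (lam * C + mu) * ∑ i ∈ Finset.Icc 1 K, (x i - y i)⁺ := by ring

theorem truncSol_monotone_general (hmono : MonotoneOn f S) (hlip : LipschitzOnWith C f S)
    (hlam : 0 ≤ lam) (hmu : 0 ≤ mu) {K : ℕ} {a : ℝ} {s1 s1' s2 s2' : ℝ → ℕ → ℝ}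
    (hs1 : ∀ j, 1 ≤ j → j ≤ K → ∀ t ∈ Ici a,
      HasDerivWithinAt (fun τ => s1 τ j) (s1' t j) (Ici a) t)
    (hs2 : ∀ j, 1 ≤ j → j ≤ K → ∀ t ∈ Ici a,
      HasDerivWithinAt (fun τ => s2 τ j) (s2' t j) (Ici a) t)
    (hsuper : ∀ j, 1 ≤ j → j ≤ K → ∀ t ∈ Ici a,
      chainDrift f lam mu (s1 t) j ≤ s1' t j)
    (hsub : ∀ j, 1 ≤ j → j ≤ K → ∀ t ∈ Ici a,
      s2' t j ≤ chainDrift f lam mu (s2 t) j)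
    (hS1 : ∀ t ∈ Ici a, ∀ j ≤ K, s1 t j ∈ S) (hS2 : ∀ t ∈ Ici a, ∀ j ≤ K, s2 t j ∈ S)
    (hinit : ∀ j, 1 ≤ j → j ≤ K → s2 a j ≤ s1 a j)
    (hleft : ∀ t ∈ Ici a, s2 t 0 ≤ s1 t 0)
    (hright : ∀ t ∈ Ici a, s2 t (K + 1) ≤ s1 t (K + 1)) :
    ∀ t ∈ Ici a, ∀ j ≤ K + 1, s2 t j ≤ s1 t j := by
  have hgrowth : ∀ t ∈ Ici a, ∀ j ∈ Finset.Icc 1 K, 0 < s2 t j - s1 t j →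
      s2' t j - s1' t j ≤ (lam * C + mu) * ∑ i ∈ Finset.Icc 1 K, (s2 t i - s1 t i)⁺ := by
    intro t ht j hj hpos
    obtain ⟨hj1, hjK⟩ := Finset.mem_Icc.1 hj
    exact (sub_le_sub (hsub j hj1 hjK t ht) (hsuper j hj1 hjK t ht)).trans
      (chainDrift_sub_le_mul_sum_posPart hmono hlip hlam hmu (hS2 t ht) (hS1 t ht) (hleft t ht)
        (hright t ht) hjK (sub_pos.1 hpos).le)
  have hinterior : ∀ t ∈ Ici a, ∀ j ∈ Finset.Icc 1 K, s2 t j - s1 t j ≤ 0 :=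
    nonpos_of_deriv_le_mul_sum_posPart (w := fun t j => s2 t j - s1 t j)
      (w' := fun t j => s2' t j - s1' t j) (by positivity)
      (fun j hj t ht =>
        have ⟨hj1, hjK⟩ := Finset.mem_Icc.1 hj
        (hs2 j hj1 hjK t ht).sub (hs1 j hj1 hjK t ht))
      hgrowth
      (fun j hj => sub_nonpos.2 (hinit j (Finset.mem_Icc.1 hj).1 (Finset.mem_Icc.1 hj).2))
  intro t ht j hj
  rcases Nat.eq_zero_or_pos j with rfl | hj1
  · exact hleft t ht
  rcases hj.eq_or_lt with rfl | hjK
  · exact hright t ht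
  · exact sub_nonpos.1 (hinterior t ht j (Finset.mem_Icc.2 ⟨hj1, Nat.lt_succ_iff.1 hjK⟩))

end Chain

theorem monotoneOn_Icc_of_second_deriv_nonneg {f f' f'' : ℝ → ℝ} {a b : ℝ}
    (hf : ∀ x ∈ Set.Icc a b, HasDerivWithinAt f (f' x) (Set.Icc a b) x)
    (hf' : ∀ x ∈ Set.Icc a b, HasDerivWithinAt f' (f'' x) (Set.Icc a b) x)
    (ha : 0 ≤ f' a) (hf'' : ∀ x ∈ Set.Icc a b, 0 ≤ f'' x) : MonotoneOn f (Set.Icc a b) := by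
  have hmono' : MonotoneOn f' (Set.Icc a b) :=
    monotoneOn_of_hasDerivWithinAt_nonneg (convex_Icc a b)
      (fun x hx => (hf' x hx).continuousWithinAt)
      (fun x hx => (hf' x (interior_subset hx)).mono interior_subset)
      (fun x hx => hf'' x (interior_subset hx))
  refine monotoneOn_of_hasDerivWithinAt_nonneg (convex_Icc a b)
    (fun x hx => (hf x hx).continuousWithinAt)
    (fun x hx => (hf x (interior_subset hx)).mono interior_subset) fun x hx => ?_
  have hx' := interior_subset hx
  exact ha.trans (hmono' (left_mem_Icc.2 (hx'.1.trans hx'.2)) hx' hx'.1)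

theorem choose_add_two_mul (n m : ℕ) :
    (n + 2).choose (m + 2) * ((m + 2) * (m + 1)) = (n + 2) * (n + 1) * n.choose m := by
  calc (n + 2).choose (m + 2) * ((m + 2) * (m + 1))
      = (n + 2).choose (m + 2) * (m + 2) * (m + 1) := (mul_assoc _ _ _).symm
    _ = (n + 2) * ((n + 1).choose (m + 1) * (m + 1)) := by
        rw [← Nat.add_one_mul_choose_eq (n + 1) (m + 1), mul_assoc]
    _ = (n + 2) * (n + 1) * n.choose m := by
        rw [← Nat.add_one_mul_choose_eq n m, mul_assoc]

theorem choose_add_mul_choose (b c m : ℕ) :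
    (b + c).choose (b + m) * (b + m).choose m = (b + c).choose b * c.choose m := by
  rw [← Nat.choose_symm_add, Nat.choose_mul (Nat.le_add_right b m), Nat.add_sub_cancel_left,
    Nat.add_sub_cancel_left]

theorem fLk_self {L : ℕ} (hL : 1 ≤ L) (x : ℝ) : fLk L L x = L * x := by
  unfold fLk
  rw [Finset.sum_eq_single_of_mem 1 (Finset.mem_Icc.2 ⟨le_rfl, hL⟩)]
  · simp
  · intro i hi hne
    have hchoose : (L - L + i - 2).choose (i - 1) = 0 :=
      Nat.choose_eq_zero_of_lt (by have := (Finset.mem_Icc.1 hi).1; omega)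
    simp only [hchoose, Nat.cast_zero, mul_zero, zero_mul]

/-- The coefficient of `x ^ (b + m + 2)` in `fLk L k` for `L = b + c + 2` and `k = c + 1`. This
parametrization of the case `k < L` removes the truncated subtractions from `fLk`. -/
noncomputable def fLkCoeff (b c m : ℕ) : ℝ :=
  (b + c + 2).choose (b + m + 2) * (b + m).choose m * (-1) ^ m

/-- The derivative of `fLk L k` for `L = b + c + 2` and `k = c + 1`. -/
noncomputable def fLkDeriv (b c : ℕ) (x : ℝ) : ℝ :=
  ∑ m ∈ Finset.range (c + 1), fLkCoeff b c m * ((b + m + 2 : ℕ) * x ^ (b + m + 1))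

theorem fLk_eq_sum_range (b c : ℕ) (x : ℝ) : fLk (b + c + 2) (c + 1) x =
    ∑ m ∈ Finset.range (c + 1), fLkCoeff b c m * x ^ (b + m + 2) := by
  unfold fLk
  rw [← Finset.Ico_add_one_right_eq_Icc, Finset.sum_Ico_eq_sum_range]
  refine Finset.sum_congr rfl fun m _ => ?_
  have hexp : b + c + 2 - (c + 1) + (1 + m) = b + m + 2 := by omega
  rw [hexp, Nat.add_sub_cancel, Nat.add_sub_cancel_left, fLkCoeff]

theorem hasDerivAt_fLk (b c : ℕ) (x : ℝ) :
    HasDerivAt (fLk (b + c + 2) (c + 1)) (fLkDeriv b c x) x := by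
  rw [funext (fLk_eq_sum_range b c)]
  exact HasDerivAt.fun_sum fun m _ => (hasDerivAt_pow (b + m + 2) x).const_mul _

theorem fLkCoeff_mul (b c m : ℕ) : fLkCoeff b c m * ((b + m + 2 : ℕ) * (b + m + 1 : ℕ)) =
    (b + c + 2) * (b + c + 1) * (b + c).choose b * (c.choose m * (-1) ^ m) := by
  have hsucc : ((b + c + 2).choose (b + m + 2) * ((b + m + 2 : ℕ) * (b + m + 1 : ℕ)) : ℝ) =
      (b + c + 2) * (b + c + 1) * (b + c).choose (b + m) :=
    mod_cast choose_add_two_mul (b + c) (b + m)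
  have hsplit : ((b + c).choose (b + m) * (b + m).choose m : ℝ) =
      (b + c).choose b * c.choose m := mod_cast choose_add_mul_choose b c m
  rw [fLkCoeff]
  linear_combination (b + m).choose m * (-1) ^ m * hsucc +
    (b + c + 2) * (b + c + 1) * (-1) ^ m * hsplit

theorem hasDerivAt_fLkDeriv (b c : ℕ) (x : ℝ) : HasDerivAt (fLkDeriv b c)
    ((b + c + 2) * (b + c + 1) * (b + c).choose b * (x ^ b * (1 - x) ^ c)) x := by
  have hbinomial : (1 - x) ^ c = ∑ m ∈ Finset.range (c + 1), (-x) ^ m * (c.choose m : ℝ) := by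
    rw [sub_eq_neg_add, add_pow]
    simp only [one_pow, mul_one]
  have hterms : HasDerivAt (fLkDeriv b c) (∑ m ∈ Finset.range (c + 1),
      fLkCoeff b c m * ((b + m + 2 : ℕ) * ((b + m + 1 : ℕ) * x ^ (b + m)))) x :=
    HasDerivAt.fun_sum fun m _ =>
      ((hasDerivAt_pow (b + m + 1) x).const_mul _).const_mul _
  convert hterms using 1
  rw [hbinomial, Finset.mul_sum, Finset.mul_sum]
  refine Finset.sum_congr rfl fun m _ => ?_
  rw [neg_pow, pow_add]
  linear_combination -(x ^ b * x ^ m) * fLkCoeff_mul b c m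

theorem monotoneOn_fLk {L k : ℕ} (hk : 1 ≤ k) (hkL : k ≤ L) :
    MonotoneOn (fLk L k) (Set.Icc 0 1) := by
  rcases hkL.eq_or_lt with rfl | hlt
  · intro x _ y _ hxy
    rw [fLk_self hk, fLk_self hk]
    gcongr
  · obtain ⟨c, rfl⟩ := Nat.exists_eq_add_of_le' hk
    obtain ⟨b, rfl⟩ : ∃ b, L = b + c + 2 := ⟨L - (c + 2), by omega⟩
    refine monotoneOn_Icc_of_second_deriv_nonneg
      (fun x _ => (hasDerivAt_fLk b c x).hasDerivWithinAt)
      (fun x _ => (hasDerivAt_fLkDeriv b c x).hasDerivWithinAt)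
      (by simp [fLkDeriv]) fun x hx => ?_
    have hx0 : 0 ≤ x := hx.1
    have hx1 : 0 ≤ 1 - x := sub_nonneg.2 hx.2
    positivity

theorem exists_lipschitzOnWith_fLk (L k : ℕ) :
    ∃ C : NNReal, LipschitzOnWith C (fLk L k) (Set.Icc 0 1) := by
  have hsmooth : ContDiff ℝ 1 (fLk L k) := by
    unfold fLk
    fun_prop
  exact hsmooth.contDiffOn.exists_lipschitzOnWith one_ne_zero (convex_Icc 0 1) isCompact_Icc

/-- Lemma 5.2: monotonicity of the truncated system. If two `[0,1]`-valued
solutions satisfy `s^{(1)}_j(0) ≥ s^{(2)}_j(0)` for `j = 1,…,K`, and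
`s^{(1)}_{K+1}(t) ≥ s^{(2)}_{K+1}(t)` for all `t ≥ 0`, then
`s^{(1)}_j(t) ≥ s^{(2)}_j(t)` for all `j = 1,…,K+1` and `t ≥ 0`. -/
theorem truncSol_monotone (L k : ℕ) (hk : 1 ≤ k) (hkL : k ≤ L)
    (lam : ℝ) (hlam : 0 < lam) (K : ℕ)
    (s1 s2 : ℝ → ℕ → ℝ)
    (hs1 : IsTruncSys L k lam K s1) (hs2 : IsTruncSys L k lam K s2)
    (hb1 : ∀ t ∈ Set.Ici (0 : ℝ), ∀ j ≤ K + 1, s1 t j ∈ Set.Icc (0 : ℝ) 1)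
    (hb2 : ∀ t ∈ Set.Ici (0 : ℝ), ∀ j ≤ K + 1, s2 t j ∈ Set.Icc (0 : ℝ) 1)
    (hinit : ∀ j, 1 ≤ j → j ≤ K → s2 0 j ≤ s1 0 j)
    (hbdry : ∀ t ∈ Set.Ici (0 : ℝ), s2 t (K + 1) ≤ s1 t (K + 1)) :
    ∀ t ∈ Set.Ici (0 : ℝ), ∀ j, 1 ≤ j → j ≤ K + 1 → s2 t j ≤ s1 t j := by
  obtain ⟨C, hlip⟩ := exists_lipschitzOnWith_fLk L k
  exact fun t ht j _ hj => truncSol_monotone_general (monotoneOn_fLk hk hkL) hlip hlam.le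
    k.cast_nonneg hs1.2 hs2.2 (fun _ _ _ _ _ => le_rfl) (fun _ _ _ _ _ => le_rfl)
    (fun t ht j hj => hb1 t ht j (hj.trans K.le_succ))
    (fun t ht j hj => hb2 t ht j (hj.trans K.le_succ))
    hinit (fun t ht => (hs2.1 t ht).trans_le (hs1.1 t ht).ge) hbdry t ht j hj
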